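/- arXiv:math/0602176 — 3 statements merged into one kernel-verified Lean document; each statement's English description precedes it below -/
import Mathlib

section
/- Let g and g' be commuting automorphisms of T^{k+1} induced by commuting matrices A, A' ∈ GL(k+1,ℤ), and let f, f' be commuting continuous self-maps of T^{k+1} with f homotopic to g and f' homotopic to g'. Suppose h : T^{k+1} → T^{k+1} is continuous, homotopic to the identity, satisfies h ∘ f = g ∘ h, and is the unique such map (i.e., any continuous h' homotopic to the identity with h' ∘ f = g ∘ h' equals h). Then h ∘ f' = g' ∘ h. -/
open MeasureTheory Filter Function Set

noncomputable section

/-- The `d`-dimensional torus `ℝ^d/ℤ^d`, modeled as a product of unit circles. -/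
abbrev Torus (d : ℕ) : Type := Fin d → AddCircle (1 : ℝ)

/-- The self-map of the torus induced by an integer matrix `A` (for `A ∈ GL(d,ℤ)`
this is the induced toral automorphism). -/
def toralMap {d : ℕ} (A : Matrix (Fin d) (Fin d) ℤ) : Torus d → Torus d :=
  fun x i => ∑ j, A i j • x j

lemma toralMap_continuous {d : ℕ} (A : Matrix (Fin d) (Fin d) ℤ) :
    Continuous (toralMap A) :=
  continuous_pi fun i => continuous_finset_sum _ fun j _ =>
    (continuous_zsmul (A i j)).comp (continuous_apply j)

/-- A linear Cartan action of `ℤ^k` on `T^{k+1}`: a homomorphism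
`ρ : ℤ^k → GL(k+1,ℤ)` such that for every `m ≠ 0` the matrix `ρ m` has `k+1`
distinct real eigenvalues, none of absolute value `1`. -/
structure CartanAction (k : ℕ) where
  ρ : (Fin k → ℤ) → Matrix (Fin (k+1)) (Fin (k+1)) ℤ
  map_zero : ρ 0 = 1
  map_add : ∀ m n, ρ (m + n) = ρ m * ρ n
  isUnit : ∀ m, IsUnit (ρ m).det
  cartan : ∀ m, m ≠ 0 → ∃ e : Fin (k+1) → ℝ, Function.Injective e ∧
    (∀ i, |e i| ≠ 1) ∧
    Matrix.charpoly ((ρ m).map (Int.cast : ℤ → ℝ)) = ∏ i, (Polynomial.X - Polynomial.C (e i))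

/-- The canonical projection `ℝ^d → T^d`. -/
def Torus.proj (d : ℕ) : (Fin d → ℝ) → Torus d := fun x i => (x i : AddCircle (1 : ℝ))

/-!
The set of maps semiconjugating `f` to a group endomorphism `g` is closed under pointwise addition
and subtraction. Both `h ∘ f'` and `g' ∘ h` belong to it, and they are homotopic, so
`h ∘ f' - g' ∘ h + h` semiconjugates `f` to `g` and is homotopic to `h`. By uniqueness it equals
`h`, that is, `h ∘ f' = g' ∘ h`.
-/

section Homotopy

open ContinuousMap

variable {X G : Type*} [TopologicalSpace X] [TopologicalSpace G] {u u' v v' : C(X, G)}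

lemma homotopic_add [Add G] [ContinuousAdd G] (hu : u.Homotopic u') (hv : v.Homotopic v') :
    (u + v).Homotopic (u' + v') :=
  (Homotopic.refl (⟨fun p ↦ p.1 + p.2, continuous_add⟩ : C(G × G, G))).comp (hu.prodMk hv)

lemma homotopic_sub [Sub G] [ContinuousSub G] (hu : u.Homotopic u') (hv : v.Homotopic v') :
    (u - v).Homotopic (u' - v') :=
  (Homotopic.refl (⟨fun p ↦ p.1 - p.2, continuous_sub⟩ : C(G × G, G))).comp (hu.prodMk hv)

lemma homotopic_sub_add [AddGroup G] [IsTopologicalAddGroup G] (huv : u.Homotopic v)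
    (w : C(X, G)) : (u - v + w).Homotopic w := by
  simpa only [sub_self, zero_add] using
    homotopic_add (homotopic_sub huv (Homotopic.refl v)) (Homotopic.refl w)

end Homotopy

section Semiconj

variable {X G : Type*}

lemma semiconj_add [AddZeroClass G] {f : X → X} {g : G →+ G} {u v : X → G}
    (hu : Semiconj u f g) (hv : Semiconj v f g) : Semiconj (u + v) f g := fun x ↦ by
  simp only [Pi.add_apply, map_add, hu.eq, hv.eq]

lemma semiconj_sub [AddGroup G] {f : X → X} {g : G →+ G} {u v : X → G}
    (hu : Semiconj u f g) (hv : Semiconj v f g) : Semiconj (u - v) f g := fun x ↦ by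
  simp only [Pi.sub_apply, map_sub, hu.eq, hv.eq]

variable [TopologicalSpace X] [TopologicalSpace G] [AddGroup G] [IsTopologicalAddGroup G]

theorem semiconj_of_unique_semiconj {f : X → X} {g : G →+ G} {f' : C(X, X)} {g' : C(G, G)}
    {h : C(X, G)} (hff' : Function.Commute f f') (hgg' : Function.Commute g g')
    (hhom : (h.comp f').Homotopic (g'.comp h)) (hsemi : Semiconj h f g)
    (huniq : ∀ h' : C(X, G), h'.Homotopic h → Semiconj h' f g → h' = h) :
    Semiconj h f' g' := by
  have hf' : Semiconj (h ∘ f') f g := hff'.symm.semiconj.trans hsemi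
  have hg' : Semiconj (g' ∘ h) f g := hsemi.trans hgg'.symm.semiconj
  have hfix : h.comp f' - g'.comp h + h = h :=
    huniq _ (homotopic_sub_add hhom h) (semiconj_add (semiconj_sub hf' hg') hsemi)
  have heq : h.comp f' = g'.comp h := sub_eq_zero.mp (add_eq_right.mp hfix)
  exact DFunLike.congr_fun heq

theorem stmt1_general {f : G → G} {g : G →+ G} {f' g' h : C(G, G)}
    (hff' : Function.Commute f f') (hgg' : Function.Commute g g') (hf'g' : f'.Homotopic g')
    (hhid : h.Homotopic (ContinuousMap.id G)) (hsemi : Semiconj h f g)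
    (huniq : ∀ h' : C(G, G), h'.Homotopic (ContinuousMap.id G) → Semiconj h' f g → h' = h) :
    Semiconj h f' g' := by
  have hhf' : (h.comp f').Homotopic g' := hhid.comp hf'g'
  have hg'h : (g'.comp h).Homotopic g' := (ContinuousMap.Homotopic.refl g').comp hhid
  exact semiconj_of_unique_semiconj hff' hgg' (hhf'.trans hg'h.symm) hsemi
    fun h' hh' ↦ huniq h' (hh'.trans hhid)

end Semiconj

section Torus

variable {d : ℕ}

lemma toralMap_add (A : Matrix (Fin d) (Fin d) ℤ) (x y : Torus d) :
    toralMap A (x + y) = toralMap A x + toralMap A y := by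
  funext i
  simp only [toralMap, Pi.add_apply, smul_add, Finset.sum_add_distrib]

/-- The group endomorphism of the torus induced by an integer matrix, i.e. `toralMap A` bundled as
an additive homomorphism. -/
def toralHom (A : Matrix (Fin d) (Fin d) ℤ) : Torus d →+ Torus d :=
  AddMonoidHom.mk' (toralMap A) (toralMap_add A)

lemma toralMap_mul (A B : Matrix (Fin d) (Fin d) ℤ) (x : Torus d) :
    toralMap (A * B) x = toralMap A (toralMap B x) := by
  funext i
  simp only [toralMap, Matrix.mul_apply, Finset.sum_smul, Finset.smul_sum, mul_smul]
  exact Finset.sum_comm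

lemma toralMap_commute {A B : Matrix (Fin d) (Fin d) ℤ} (hAB : A * B = B * A) :
    Function.Commute (toralMap A) (toralMap B) := fun x ↦ by
  rw [← toralMap_mul, ← toralMap_mul, hAB]

end Torus

/-- If `h` is the unique continuous map homotopic to the identity
semiconjugating `f` to the toral automorphism `g` induced by `A`, and `f'`, `A'`
commute with `f`, `A` respectively (with `f'` homotopic to the automorphism induced
by `A'`), then `h` also semiconjugates `f'` to the automorphism induced by `A'`. -/
theorem stmt1 (k : ℕ) (A A' : Matrix (Fin (k+1)) (Fin (k+1)) ℤ)
    (hA : IsUnit A.det) (hA' : IsUnit A'.det) (hAA' : A * A' = A' * A)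
    (f f' : Torus (k+1) → Torus (k+1)) (hf : Continuous f) (hf' : Continuous f')
    (hff' : f ∘ f' = f' ∘ f)
    (hfg : ContinuousMap.Homotopic ⟨f, hf⟩ ⟨toralMap A, toralMap_continuous A⟩)
    (hf'g' : ContinuousMap.Homotopic ⟨f', hf'⟩ ⟨toralMap A', toralMap_continuous A'⟩)
    (h : Torus (k+1) → Torus (k+1)) (hh : Continuous h)
    (hhid : ContinuousMap.Homotopic ⟨h, hh⟩ (ContinuousMap.id _))
    (hsemi : h ∘ f = toralMap A ∘ h)
    (huniq : ∀ (h' : Torus (k+1) → Torus (k+1)) (hh' : Continuous h'),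
      ContinuousMap.Homotopic ⟨h', hh'⟩ (ContinuousMap.id _) →
      h' ∘ f = toralMap A ∘ h' → h' = h) :
    h ∘ f' = toralMap A' ∘ h := by
  exact (stmt1_general (g := toralHom A) (g' := ⟨toralMap A', toralMap_continuous A'⟩)
    (h := ⟨h, hh⟩) (congrFun hff') (toralMap_commute hAA') hf'g' hhid (congrFun hsemi)
    fun h' hid hs ↦ ContinuousMap.ext (congrFun (huniq h' h'.continuous hid hs.comp_eq))).comp_eq
end
end

section
/- Let k ≥ 1 and let χ_1, …, χ_{k+1} be linear functionals on ℝ^k such that χ_1 + ⋯ + χ_{k+1} = 0 and any k of them are linearly independent. Then for each i ∈ {1, …, k+1} the open cone C_i = { t ∈ ℝ^k : χ_i(t) > 0 and χ_j(t) < 0 for all j ≠ i } is nonempty, and there exist t_i ∈ C_i, i = 1, …, k+1, with t_1 + ⋯ + t_{k+1} = 0. -/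
open Filter Function Set

/-!
Since the functionals `χ i` add up to zero, the values `(χ i t)ᵢ` of any vector `t` add up to zero.
Conversely, because all the functionals but one are linearly independent, every tuple of scalars
adding up to zero is attained, and by a vector depending linearly on the tuple. Apply this to the
vertices of the standard simplex, scaled by their number and translated so that their barycentre
is the origin: the `i`-th one is positive at `i`, equal to `-1` elsewhere, and they add up to zero.
-/

section DualFamily

variable {ι K V : Type*} [Field K] [AddCommGroup V] [Module K V]

theorem range_pi_eq_top_iff_linearIndependent [Finite ι] {χ : ι → Module.Dual K V} :
    (LinearMap.pi χ).range = ⊤ ↔ LinearIndependent K χ := by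
  have coe_range : range (flip fun i v ↦ χ i v) = (LinearMap.pi χ).range := rfl
  rw [← Submodule.span_eq (LinearMap.pi χ).range, ← coe_range,
    span_flip_eq_top_iff_linearIndependent]
  exact LinearMap.linearIndependent_iff (LinearMap.ltoFun K V K K)
    (LinearMap.ker_eq_bot.2 DFunLike.coe_injective)

theorem exists_linearMap_forall_apply_eq_of_sum_eq_zero [Fintype ι] {χ : ι → Module.Dual K V}
    (hsum : ∑ i, χ i = 0) {i₀ : ι}
    (hindep : LinearIndependent K fun j : {j // j ≠ i₀} ↦ χ j) :
    ∃ s : (ι → K) →ₗ[K] V, ∀ a : ι → K, ∑ i, a i = 0 → ∀ i, χ i (s a) = a i := by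
  classical
  obtain ⟨g, hg⟩ := LinearMap.exists_rightInverse_of_surjective _
    (range_pi_eq_top_iff_linearIndependent.2 hindep)
  refine ⟨g ∘ₗ LinearMap.funLeft K K Subtype.val, fun a ha i ↦ ?_⟩
  set t := (g ∘ₗ LinearMap.funLeft K K Subtype.val) a
  have apply_of_ne (j : {j // j ≠ i₀}) : χ j t = a j :=
    congrFun (LinearMap.congr_fun hg fun j ↦ a j) j
  obtain rfl | hi := eq_or_ne i i₀
  · have hχ : ∑ j, χ j t = ∑ j, a j := by
      rw [ha, ← LinearMap.sum_apply, hsum, LinearMap.zero_apply]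
    simpa only [Fintype.sum_eq_add_sum_subtype_ne _ i, apply_of_ne, add_left_inj] using hχ
  · exact apply_of_ne ⟨i, hi⟩

end DualFamily

section CenteredVertex

variable {ι : Type*} [Fintype ι] [DecidableEq ι] (K : Type*) [Ring K]

/-- The `i`-th vertex of the standard simplex in `ι → K`, translated so that the barycentre of the
vertices is the origin, and scaled by the number of vertices to avoid division. -/
def centeredVertex (i : ι) : ι → K :=
  Pi.single i (Fintype.card ι : K) - 1

theorem centeredVertex_apply_self (i : ι) :
    centeredVertex K i i = (Fintype.card ι : K) - 1 := by
  simp [centeredVertex]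

theorem centeredVertex_apply_of_ne {i j : ι} (h : j ≠ i) : centeredVertex K i j = -1 := by
  simp [centeredVertex, h]

theorem sum_centeredVertex_apply (i : ι) : ∑ j, centeredVertex K i j = 0 := by
  simp [centeredVertex]

theorem sum_centeredVertex : ∑ i : ι, centeredVertex K i = 0 := by
  ext j
  simp [centeredVertex]

theorem centeredVertex_apply_self_pos [PartialOrder K] [IsStrictOrderedRing K] [Nontrivial ι]
    (i : ι) : 0 < centeredVertex K i i := by
  rw [centeredVertex_apply_self, sub_pos]
  exact_mod_cast Fintype.one_lt_card (α := ι)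

theorem centeredVertex_apply_neg_of_ne [PartialOrder K] [IsStrictOrderedRing K] {i j : ι}
    (h : j ≠ i) : centeredVertex K i j < 0 := by
  rw [centeredVertex_apply_of_ne K h]
  exact neg_lt_zero.2 zero_lt_one

end CenteredVertex

theorem stmt12_general {ι K V : Type*} [Fintype ι] [Nontrivial ι]
    [Field K] [PartialOrder K] [IsStrictOrderedRing K] [AddCommGroup V] [Module K V]
    {χ : ι → Module.Dual K V} (hsum : ∑ i, χ i = 0) {i₀ : ι}
    (hindep : LinearIndependent K fun j : {j // j ≠ i₀} ↦ χ j) :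
    ∃ t : ι → V, (∀ i, 0 < χ i (t i) ∧ ∀ j, j ≠ i → χ j (t i) < 0) ∧ ∑ i, t i = 0 := by
  classical
  obtain ⟨s, hs⟩ := exists_linearMap_forall_apply_eq_of_sum_eq_zero hsum hindep
  have apply_vertex (i j : ι) : χ j (s (centeredVertex K i)) = centeredVertex K i j :=
    hs _ (sum_centeredVertex_apply K i) j
  refine ⟨fun i ↦ s (centeredVertex K i), fun i ↦ ⟨?_, fun j hj ↦ ?_⟩, ?_⟩
  · exact (centeredVertex_apply_self_pos K i).trans_eq (apply_vertex i i).symm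
  · exact (apply_vertex i j).trans_lt (centeredVertex_apply_neg_of_ne K hj)
  · rw [← map_sum, sum_centeredVertex, map_zero]

/-- If `χ_1, …, χ_{k+1}` are linear functionals on `ℝ^k` with
`χ_1 + ⋯ + χ_{k+1} = 0` and any `k` of them linearly independent, then each cone
`C_i = {t : χ_i(t) > 0, χ_j(t) < 0 for j ≠ i}` is nonempty, and one can pick
`t_i ∈ C_i` with `t_1 + ⋯ + t_{k+1} = 0`. -/
theorem stmt12 (k : ℕ) (hk : 1 ≤ k)
    (χ : Fin (k+1) → ((Fin k → ℝ) →ₗ[ℝ] ℝ))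
    (hsum : ∑ i, χ i = 0)
    (hindep : ∀ i : Fin (k+1),
      LinearIndependent ℝ (fun j : {j : Fin (k+1) // j ≠ i} => χ (j : Fin (k+1)))) :
    (∀ i : Fin (k+1), ∃ t : Fin k → ℝ,
      0 < χ i t ∧ ∀ j : Fin (k+1), j ≠ i → χ j t < 0) ∧
    ∃ t : Fin (k+1) → (Fin k → ℝ),
      (∀ i, 0 < χ i (t i) ∧ ∀ j : Fin (k+1), j ≠ i → χ j (t i) < 0) ∧
      ∑ i, t i = 0 := by
  have : Nontrivial (Fin (k + 1)) := Fin.nontrivial_iff_two_le.2 (Nat.succ_le_succ hk)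
  obtain ⟨t, ht, ht_sum⟩ := stmt12_general hsum (hindep 0)
  exact ⟨fun i ↦ ⟨t i, ht i⟩, t, ht, ht_sum⟩
end

section
/- Let μ be a nonzero Radon measure on ℝ (a Borel measure finite on compact sets). Let G be the set of invertible affine maps g(x) = ax + b (a ≠ 0) of ℝ for which there exists a constant c > 0 with g_*μ = c·μ. Then G is a subgroup of the group of invertible affine transformations of ℝ, and G is closed: if g_n(x) = a_n x + b_n belong to G, a_n → a with a ≠ 0, and b_n → b, then the map g(x) = ax + b belongs to G. -/
open MeasureTheory Filter Function Set
open scoped NNReal ENNReal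

/-- The set of (parameters `(a,b)` of) invertible affine maps `x ↦ a x + b` of `ℝ`
which preserve the measure `μ` up to a positive scalar multiple. -/
def affScaleGroup (μ : Measure ℝ) : Set (ℝ × ℝ) :=
  {p : ℝ × ℝ | p.1 ≠ 0 ∧ ∃ c : ℝ≥0, 0 < c ∧
    Measure.map (fun x => p.1 * x + p.2) μ = (c : ℝ≥0∞) • μ}

/-!
On a locally compact Hausdorff space `X`, a regular measure `μ` is determined by its functional
`Λ_μ f = ∫ f ∂μ` on `C_c(X, ℝ≥0)`. Hence, if `μ` and `ν` vanish simultaneously, `ν` is a positive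
multiple of `μ` if and only if `Λ_ν f * Λ_μ g = Λ_ν g * Λ_μ f` for all `f` and `g`. This criterion
no longer mentions the scalar. For `ν = μ.map φ` both of its sides vary continuously with the
homeomorphism `φ`, because the supports of the functions `f ∘ φ` stay locally in one compact set;
so the homeomorphisms scaling `μ` form a closed set. The affine maps of a field are such a
continuous family, indexed by their coefficients.
-/

open scoped Topology CompactlySupported
open CompactlySupportedContinuousMap

section ScalingSubgroup

variable {X : Type*} [TopologicalSpace X] [MeasurableSpace X] [BorelSpace X]

/-- The group of homeomorphisms that preserve `μ` up to a positive scalar. -/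
def scalingSubgroup (μ : Measure X) : Subgroup (X ≃ₜ X) where
  carrier := {g | ∃ c : ℝ≥0, 0 < c ∧ μ.map g = c • μ}
  one_mem' := ⟨1, one_pos, by rw [one_smul]; exact Measure.map_id⟩
  mul_mem' := by
    rintro g h ⟨c, hc, hg⟩ ⟨d, hd, hh⟩
    refine ⟨d * c, mul_pos hd hc, ?_⟩
    calc μ.map (g * h) = (μ.map h).map g := (Measure.map_map g.measurable h.measurable).symm
      _ = (d * c) • μ := by rw [hh, Measure.map_smul, hg, smul_smul]
  inv_mem' := by
    rintro g ⟨c, hc, hg⟩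
    refine ⟨c⁻¹, inv_pos.mpr hc, ?_⟩
    calc μ.map g.symm = c⁻¹ • (c • μ).map g.symm := by
          rw [Measure.map_smul, inv_smul_smul₀ hc.ne']
      _ = c⁻¹ • μ := by
          rw [← hg, Measure.map_map g.symm.measurable g.measurable, g.symm_comp_self,
            Measure.map_id]

theorem mem_scalingSubgroup {μ : Measure X} {g : X ≃ₜ X} :
    g ∈ scalingSubgroup μ ↔ ∃ c : ℝ≥0, 0 < c ∧ μ.map g = c • μ :=
  Iff.rfl

end ScalingSubgroup

section Proportional

variable {X : Type*} [TopologicalSpace X] [MeasurableSpace X]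

theorem integralLinearMap_smul [OpensMeasurableSpace X] (c : ℝ≥0) (μ : Measure X)
    [IsFiniteMeasureOnCompacts μ] [IsFiniteMeasureOnCompacts (c • μ)] (f : C_c(X, ℝ≥0)) :
    integralLinearMap (c • μ) f = c * integralLinearMap μ f := by
  apply NNReal.eq
  simp [integral_smul_nnreal_measure, NNReal.smul_def]

variable [T2Space X] [LocallyCompactSpace X] [BorelSpace X]

theorem exists_integralLinearMap_ne_zero {μ : Measure X} [μ.Regular] (hμ : μ ≠ 0) :
    ∃ f : C_c(X, ℝ≥0), integralLinearMap μ f ≠ 0 := by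
  contrapose! hμ
  refine NNRealRMK.integralLinearMap_inj.mp (LinearMap.ext fun f => ?_)
  rw [hμ f]
  apply NNReal.eq
  simp

theorem exists_pos_eq_smul_iff {μ ν : Measure X} [μ.Regular] [ν.Regular] (h₀ : ν = 0 ↔ μ = 0) :
    (∃ c : ℝ≥0, 0 < c ∧ ν = c • μ) ↔ ∀ f g : C_c(X, ℝ≥0),
      integralLinearMap ν f * integralLinearMap μ g =
        integralLinearMap ν g * integralLinearMap μ f := by
  constructor
  · rintro ⟨c, -, rfl⟩ f g
    simp only [integralLinearMap_smul]
    ring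
  · intro h
    obtain rfl | hμ := eq_or_ne μ 0
    · exact ⟨1, one_pos, by rw [h₀.mpr rfl, smul_zero]⟩
    obtain ⟨g, hg⟩ := exists_integralLinearMap_ne_zero hμ
    set c := integralLinearMap ν g / integralLinearMap μ g
    have hν : ν = c • μ := by
      refine NNRealRMK.integralLinearMap_inj.mp (LinearMap.ext fun f => ?_)
      rw [integralLinearMap_smul, div_mul_eq_mul_div, ← h f g, mul_div_cancel_right₀ _ hg]
    refine ⟨c, pos_iff_ne_zero.mpr fun hc => hμ (h₀.mp ?_), hν⟩
    rw [hν, hc, zero_smul]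

end Proportional

section ContinuousFamily

variable {T X Y : Type*} [TopologicalSpace T] [TopologicalSpace X] [TopologicalSpace Y]

theorem exists_isCompact_eventually_mapsTo [WeaklyLocallyCompactSpace Y] {ψ : T → X → Y}
    (hψ : Continuous ψ.uncurry) {K : Set X} (hK : IsCompact K) (t₀ : T) :
    ∃ L, IsCompact L ∧ ∀ᶠ t in 𝓝 t₀, MapsTo (ψ t) K L := by
  obtain ⟨L, hL, hKL⟩ := exists_compact_superset (hK.image (hψ.comp (.prodMk_right t₀)))
  refine ⟨L, hL, hK.eventually_forall_of_forall_eventually fun x hx => ?_⟩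
  have hmem : L ∈ 𝓝 (ψ.uncurry (t₀, x)) := mem_interior_iff_mem_nhds.mp (hKL ⟨x, hx, rfl⟩)
  exact hψ.continuousAt hmem

variable [MeasurableSpace X] {φ : T → X ≃ₜ X}

theorem continuous_integral_comp_homeomorph [OpensMeasurableSpace X]
    [WeaklyLocallyCompactSpace X] {E : Type*} [NormedAddCommGroup E] [NormedSpace ℝ E]
    (μ : Measure X) [IsFiniteMeasureOnCompacts μ]
    (hφ : Continuous fun p : T × X => φ p.1 p.2)
    (hφ_symm : Continuous fun p : T × X => (φ p.1).symm p.2) (f : C_c(X, E)) :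
    Continuous fun t => ∫ x, f (φ t x) ∂μ := by
  refine continuous_iff_continuousAt.mpr fun t₀ => ?_
  obtain ⟨L, hL, hsupp⟩ := exists_isCompact_eventually_mapsTo (ψ := fun t => (φ t).symm) hφ_symm
    f.hasCompactSupport.isCompact t₀
  refine (continuousOn_integral_of_compact_support (f := fun t x => f (φ t x)) hL
    (f.continuous.comp hφ).continuousOn fun t x ht hx => ?_).continuousAt hsupp
  refine image_eq_zero_of_notMem_tsupport fun hfx => hx ?_
  simpa only [Homeomorph.symm_apply_apply] using ht hfx

variable [BorelSpace X]

theorem continuous_integralLinearMap_map [WeaklyLocallyCompactSpace X] (μ : Measure X)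
    [IsFiniteMeasureOnCompacts μ] [∀ t, IsFiniteMeasureOnCompacts (μ.map (φ t))]
    (hφ : Continuous fun p : T × X => φ p.1 p.2)
    (hφ_symm : Continuous fun p : T × X => (φ p.1).symm p.2) (f : C_c(X, ℝ≥0)) :
    Continuous fun t => integralLinearMap (μ.map (φ t)) f := by
  have hreal (t : T) : (integralLinearMap (μ.map (φ t)) f : ℝ) = ∫ x, f.toReal (φ t x) ∂μ := by
    rw [← (φ t).measurableEmbedding.integral_map]
    simp
  rw [NNReal.isEmbedding_coe.continuous_iff]
  exact (continuous_integral_comp_homeomorph μ hφ hφ_symm f.toReal).congr fun t => (hreal t).symm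

theorem isClosed_setOf_mem_scalingSubgroup [T2Space X] [LocallyCompactSpace X]
    (μ : Measure X) [μ.Regular]
    (hφ : Continuous fun p : T × X => φ p.1 p.2)
    (hφ_symm : Continuous fun p : T × X => (φ p.1).symm p.2) :
    IsClosed {t | φ t ∈ scalingSubgroup μ} := by
  have (t : T) : (μ.map (φ t)).Regular := Measure.Regular.map (φ t)
  have hΛ := continuous_integralLinearMap_map μ hφ hφ_symm
  have h₀ (t : T) : μ.map (φ t) = 0 ↔ μ = 0 :=
    Measure.map_eq_zero_iff (φ t).measurable.aemeasurable
  simp only [mem_scalingSubgroup, exists_pos_eq_smul_iff (h₀ _), ofPred_forall]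
  exact isClosed_iInter fun f => isClosed_iInter fun g =>
    isClosed_eq ((hΛ f).mul_const _) ((hΛ g).mul_const _)

end ContinuousFamily

section Affine

variable {𝕜 : Type*} [Field 𝕜] [TopologicalSpace 𝕜]

section IsTopologicalRing

variable [IsTopologicalRing 𝕜]

theorem affineHomeomorph_one_zero : affineHomeomorph (1 : 𝕜) 0 one_ne_zero = 1 := by
  ext x
  simp

theorem affineHomeomorph_mul {a b c d : 𝕜} (ha : a ≠ 0) (hc : c ≠ 0) :
    affineHomeomorph a b ha * affineHomeomorph c d hc =
      affineHomeomorph (a * c) (a * d + b) (mul_ne_zero ha hc) := by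
  ext x
  simp only [Homeomorph.mul_apply, affineHomeomorph_apply]
  ring

theorem affineHomeomorph_inv {a b : 𝕜} (ha : a ≠ 0) :
    (affineHomeomorph a b ha)⁻¹ = affineHomeomorph a⁻¹ (-(b / a)) (inv_ne_zero ha) := by
  ext x
  simp only [Homeomorph.inv_apply, affineHomeomorph_symm_apply, affineHomeomorph_apply]
  ring

variable [MeasurableSpace 𝕜] [BorelSpace 𝕜]

/-- The invertible affine maps `x ↦ a * x + b` preserving `μ` up to a positive scalar, recorded
by their coefficients `(a, b)`: the set `affScaleGroup` over an arbitrary topological field. -/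
def affineScalingSet (μ : Measure 𝕜) : Set (𝕜 × 𝕜) :=
  {p | ∃ h : p.1 ≠ 0, affineHomeomorph p.1 p.2 h ∈ scalingSubgroup μ}

end IsTopologicalRing

theorem affScaleGroup_eq_affineScalingSet (μ : Measure ℝ) :
    affScaleGroup μ = affineScalingSet μ :=
  Set.ext fun _ => exists_prop.symm

variable [IsTopologicalDivisionRing 𝕜] [T2Space 𝕜] [LocallyCompactSpace 𝕜] [MeasurableSpace 𝕜]
  [BorelSpace 𝕜]

theorem closure_affineScalingSet_inter_subset (μ : Measure 𝕜) [μ.Regular] :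
    closure (affineScalingSet μ) ∩ {p | p.1 ≠ 0} ⊆ affineScalingSet μ := by
  let φ (t : {p : 𝕜 × 𝕜 | p.1 ≠ 0}) : 𝕜 ≃ₜ 𝕜 := affineHomeomorph t.1.1 t.1.2 t.2
  have hφ : Continuous fun p : {p : 𝕜 × 𝕜 | p.1 ≠ 0} × 𝕜 => φ p.1 p.2 := by
    simp only [φ, affineHomeomorph_apply]
    fun_prop
  have hφ_symm : Continuous fun p : {p : 𝕜 × 𝕜 | p.1 ≠ 0} × 𝕜 => (φ p.1).symm p.2 := by
    simp only [φ, affineHomeomorph_symm_apply]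
    exact .div (by fun_prop) (by fun_prop) fun p => p.1.2
  have hclosed : IsClosed ((↑) ⁻¹' affineScalingSet μ : Set {p : 𝕜 × 𝕜 | p.1 ≠ 0}) := by
    convert isClosed_setOf_mem_scalingSubgroup μ hφ hφ_symm using 1
    exact Set.ext fun t => exists_prop_of_true t.2
  have hinter : {p : 𝕜 × 𝕜 | p.1 ≠ 0} ∩ affineScalingSet μ = affineScalingSet μ :=
    inter_eq_right.mpr fun _ hp => hp.1
  rw [inter_comm]
  simpa only [hinter] using isClosed_preimage_val.mp hclosed

theorem stmt13_general (μ : Measure 𝕜) [μ.Regular] :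
    ((1, 0) ∈ affineScalingSet μ ∧
     (∀ p q : 𝕜 × 𝕜, p ∈ affineScalingSet μ → q ∈ affineScalingSet μ →
       (p.1 * q.1, p.1 * q.2 + p.2) ∈ affineScalingSet μ) ∧
     (∀ p : 𝕜 × 𝕜, p ∈ affineScalingSet μ → (p.1⁻¹, -(p.2 / p.1)) ∈ affineScalingSet μ)) ∧
    closure (affineScalingSet μ) ∩ {p | p.1 ≠ 0} ⊆ affineScalingSet μ := by
  refine ⟨⟨⟨one_ne_zero, ?_⟩, ?_, ?_⟩, closure_affineScalingSet_inter_subset μ⟩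
  · exact affineHomeomorph_one_zero (𝕜 := 𝕜) ▸ one_mem _
  · rintro p q ⟨hp, hpμ⟩ ⟨hq, hqμ⟩
    exact ⟨mul_ne_zero hp hq, affineHomeomorph_mul hp hq ▸ mul_mem hpμ hqμ⟩
  · rintro p ⟨hp, hpμ⟩
    exact ⟨inv_ne_zero hp, affineHomeomorph_inv hp ▸ inv_mem hpμ⟩

end Affine

/-- For a nonzero Radon measure `μ` on `ℝ`, the collection `G`
of invertible affine maps `g(x) = a x + b` with `g_*μ = c·μ` for some `c > 0` is
a subgroup of the affine group of `ℝ` (contains the identity, and is closed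
under composition and inversion), and is closed under limits of its elements. -/
theorem stmt13 (μ : Measure ℝ) [IsFiniteMeasureOnCompacts μ] (hμ : μ ≠ 0) :
    ((1, 0) ∈ affScaleGroup μ ∧
     (∀ p q : ℝ × ℝ, p ∈ affScaleGroup μ → q ∈ affScaleGroup μ →
       (p.1 * q.1, p.1 * q.2 + p.2) ∈ affScaleGroup μ) ∧
     (∀ p : ℝ × ℝ, p ∈ affScaleGroup μ → (p.1⁻¹, -(p.2 / p.1)) ∈ affScaleGroup μ)) ∧
    (∀ (a b : ℝ) (s : ℕ → ℝ × ℝ), (∀ n, s n ∈ affScaleGroup μ) →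
      Tendsto (fun n => (s n).1) atTop (nhds a) → a ≠ 0 →
      Tendsto (fun n => (s n).2) atTop (nhds b) →
      (a, b) ∈ affScaleGroup μ) := by
  obtain ⟨hgroup, hclosed⟩ := affScaleGroup_eq_affineScalingSet μ ▸ stmt13_general μ
  exact ⟨hgroup, fun a b s hs ha ha₀ hb =>
    hclosed ⟨mem_closure_of_tendsto (ha.prodMk_nhds hb) (.of_forall hs), ha₀⟩⟩
end
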